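/- arXiv:2510.10698 — 2 statements merged into one kernel-verified Lean document; each statement's English description precedes it below -/
import Mathlib

section
/- Call an instance of the asymmetric chore division problem entitlement-divisible if for every pair of agents i, j the ratio max{w_i/w_j, w_j/w_i} is an integer. Every entitlement-divisible instance admits a 10-WMMS assignment. -/
open Finset

/-- Cost of a bundle `S` of chores to agent `i`, given per-chore costs `V`. -/
noncomputable def costOf {n m : ℕ} (V : Fin n → Fin m → ℝ) (i : Fin n)
    (S : Finset (Fin m)) : ℝ :=
  ∑ b ∈ S, V i b

/-- `A` is an `n`-partition of the chores: pairwise disjoint bundles whose union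
is the set of all chores. -/
def IsPartition {n m : ℕ} (A : Fin n → Finset (Fin m)) : Prop :=
  (∀ j k, j ≠ k → Disjoint (A j) (A k)) ∧ Finset.univ.biUnion A = Finset.univ

/-- Weighted maximin share of agent `i` under entitlements `w`. -/
noncomputable def WMMS {n m : ℕ} (V : Fin n → Fin m → ℝ) (w : Fin n → ℝ)
    (i : Fin n) : ℝ :=
  sInf { x | ∃ A : Fin n → Finset (Fin m), IsPartition A ∧
    x = ⨆ j, costOf V i (A j) * (w i / w j) }

/-- Unweighted maximin share of agent `i`. -/
noncomputable def MMS {n m : ℕ} (V : Fin n → Fin m → ℝ) (i : Fin n) : ℝ :=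
  sInf { x | ∃ A : Fin n → Finset (Fin m), IsPartition A ∧
    x = ⨆ j, costOf V i (A j) }

/-!
Let `W t` be the total entitlement of the agents with entitlement above `t`. A partition realising
the share of agent `i` gives agent `j` a bundle of cost at most `μ i * w j`, where
`μ i = WMMS i / w i`; hence the chores costing `i` more than `μ i * t` cost at most `μ i * W t` in
total. Let every agent order the chores by decreasing cost, and let agent `i` enter at the first
position `k` with `W (w i) ≤ (k + 1) * w i`. From then on a single chore costs `i` at most
`WMMS i`, and if `T k` is the entitlement of the agents that have entered by position `k`, the
first `k + 1` chores cost every agent `i` at most `2 * μ i * T k`.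

If agent `i`, having entered at `s`, serves positions at rate `2 * w i / T s` until `T` exceeds
`2 * T s`, then every position is fully served and agent `i` bears cost at most `8 * WMMS i`.
Rounding up the cumulative shares costs each agent one further chore. Finally, letting the agents
pick their cheapest remaining chore, from the last position to the first, turns positions back into
chores without increasing any cost.
-/

section Representatives

lemma exists_injective_mem_of_lt_card {m : ℕ} {α : Type*} (N : Fin m → Finset α)
    (hN : ∀ k : Fin m, k < #(N k)) : ∃ g : Fin m → α, Function.Injective g ∧ ∀ k, g k ∈ N k := by
  classical
  refine (all_card_le_biUnion_card_iff_exists_injective N).1 fun T => ?_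
  rcases T.eq_empty_or_nonempty with rfl | hT
  · simp
  calc #T ≤ #(Iic (T.max' hT)) := card_le_card fun k hk => mem_Iic.2 (T.le_max' k hk)
    _ = T.max' hT + 1 := Fin.card_Iic _
    _ ≤ #(N (T.max' hT)) := hN _
    _ ≤ #(T.biUnion N) := card_le_card (subset_biUnion_of_mem N (T.max'_mem hT))

lemma exists_perm_antitone_comp {m : ℕ} {α : Type*} [LinearOrder α] (v : Fin m → α) :
    ∃ σ : Equiv.Perm (Fin m), Antitone (v ∘ σ) :=
  ⟨Tuple.sort (OrderDual.toDual ∘ v), Tuple.monotone_sort (OrderDual.toDual ∘ v)⟩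

variable {ι : Type*} {m : ℕ}

/-- The agents pick in the order `f (m - 1), …, f 0`: when position `k` is served, `m - 1 - k`
chores are gone, so one of the `m - k` cheapest chores of agent `f k` is left. -/
lemma exists_perm_apply_le_sorted {α : Type*} [Preorder α] {V : ι → Fin m → α}
    {σ : ι → Equiv.Perm (Fin m)} (hσ : ∀ i, Antitone (V i ∘ σ i)) (f : Fin m → ι) :
    ∃ π : Equiv.Perm (Fin m), ∀ k, V (f k) (π k) ≤ V (f k) (σ (f k) k) := by
  obtain ⟨g, hg, hmem⟩ := exists_injective_mem_of_lt_card
    (fun k : Fin m => (Ici k.rev).map (σ (f k.rev)).toEmbedding)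
    (fun k => by rw [card_map, Fin.card_Ici, Fin.val_rev]; omega)
  refine ⟨Fin.revPerm.trans (.ofBijective g (Finite.injective_iff_bijective.1 hg)), fun k => ?_⟩
  obtain ⟨j, hj, hjk⟩ := mem_map.1 (hmem k.rev)
  rw [Fin.rev_rev] at hj hjk
  exact (congrArg (V (f k)) hjk).ge.trans (hσ (f k) (mem_Ici.1 hj))

variable [DecidableEq ι]

lemma exists_owner_sum_le_sum_sorted {V : ι → Fin m → ℝ} {σ : ι → Equiv.Perm (Fin m)}
    (hσ : ∀ i, Antitone (V i ∘ σ i)) (f : Fin m → ι) :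
    ∃ owner : Fin m → ι, ∀ i, ∑ b with owner b = i, V i b ≤ ∑ k with f k = i, V i (σ i k) := by
  obtain ⟨π, hπ⟩ := exists_perm_apply_le_sorted hσ f
  refine ⟨f ∘ π.symm, fun i => ?_⟩
  calc ∑ b with (f ∘ π.symm) b = i, V i b = ∑ k with f k = i, V i (π k) := by
        rw [sum_filter, sum_filter, ← Equiv.sum_comp π]
        simp
    _ ≤ ∑ k with f k = i, V i (σ i k) := by
        refine sum_le_sum fun k hk => ?_
        obtain rfl := (mem_filter.1 hk).2
        exact hπ k

lemma exists_assignment_sum_le_of_quota [Fintype ι] {U : ι → Fin m → ℝ} {d : ι → ℕ → ℕ}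
    (hU : ∀ i, Antitone (U i)) (hU0 : ∀ i k, 0 ≤ U i k)
    (hd : ∀ k < m, k < ∑ i, ∑ j ∈ range (k + 1), d i j) :
    ∃ f : Fin m → ι, ∀ i, ∑ k with f k = i, U i k ≤ ∑ k : Fin m, d i k * U i k := by
  -- Slot `⟨(i, j), l⟩` lets agent `i` serve one position from `j` on, at cost at most `U i j`.
  let Slot := Σ p : ι × Fin m, Fin (d p.1 p.2)
  have card_open (k : Fin m) :
      #{s : Slot | s.1.2 ≤ k} = ∑ i, ∑ j ∈ range (k + 1), d i j := by
    rw [card_filter, Fintype.sum_sigma, Fintype.sum_prod_type]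
    refine sum_congr rfl fun i _ => ?_
    rw [Nat.range_succ_eq_Iic, ← Fin.map_valEmbedding_Iic, sum_map, ← filter_ge_eq_Iic, sum_filter]
    exact sum_congr rfl fun j _ => by split_ifs <;> simp_all
  obtain ⟨g, hg, hopen⟩ := exists_injective_mem_of_lt_card
    (fun k => ({s : Slot | s.1.2 ≤ k} : Finset Slot)) (fun k => card_open k ▸ hd k k.2)
  refine ⟨fun k => (g k).1.1, fun i => ?_⟩
  calc ∑ k with (g k).1.1 = i, U i k
      ≤ ∑ k with (g k).1.1 = i, U i (g k).1.2 :=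
        sum_le_sum fun k _ => hU i (mem_filter.1 (hopen k)).2
    _ = ∑ k, if (g k).1.1 = i then U i (g k).1.2 else 0 := sum_filter _ _
    _ ≤ ∑ s : Slot, if s.1.1 = i then U i s.1.2 else 0 := by
        rw [← sum_image (f := fun s : Slot => if s.1.1 = i then U i s.1.2 else 0) hg.injOn]
        exact sum_le_sum_of_subset_of_nonneg (subset_univ _) fun s _ _ => by
          split_ifs
          exacts [hU0 _ _, le_rfl]
    _ = ∑ k : Fin m, d i k * U i k := by
        rw [Fintype.sum_sigma, Fintype.sum_prod_type_right]
        simp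

end Representatives

section Rounding

/-- The integral quota obtained from fractional shares `x` by rounding up their partial sums. -/
noncomputable def ceilIncrement (x : ℕ → ℝ) (k : ℕ) : ℕ :=
  ⌈∑ j ∈ range (k + 1), x j⌉₊ - ⌈∑ j ∈ range k, x j⌉₊

variable {x : ℕ → ℝ} {m : ℕ}

lemma monotone_ceil_sum_range (hx : ∀ k, 0 ≤ x k) : Monotone fun k => ⌈∑ j ∈ range k, x j⌉₊ :=
  fun _ _ h => Nat.ceil_mono <|
    sum_le_sum_of_subset_of_nonneg (range_subset_range.2 h) fun _ _ _ => hx _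

lemma sum_range_ceilIncrement (hx : ∀ k, 0 ≤ x k) (k : ℕ) :
    ∑ j ∈ range k, ceilIncrement x j = ⌈∑ j ∈ range k, x j⌉₊ := by
  simpa [ceilIncrement] using sum_range_tsub (monotone_ceil_sum_range hx) k

lemma ceilIncrement_eq_zero {k : ℕ} (hk : x k = 0) : ceilIncrement x k = 0 := by
  simp [ceilIncrement, sum_range_succ, hk]

/-- Summation by parts, as an induction: rounding up keeps each partial sum less than `1` above its
fractional counterpart, and the unused part of that `1` is charged at the lowest cost `u`. -/
lemma sum_ceilIncrement_sub_mul_add_le (hx : ∀ k, 0 ≤ x k) {U : Fin m → ℝ} (hU : Antitone U)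
    {B u : ℝ} (hUB : ∀ k, U k ≤ B) (huU : ∀ k, u ≤ U k) (huB : u ≤ B) :
    ∑ k : Fin m, (ceilIncrement x k - x k) * U k
      + (1 - (⌈∑ j ∈ range m, x j⌉₊ - ∑ j ∈ range m, x j)) * u ≤ B := by
  induction m generalizing u with
  | zero => simpa using huB
  | succ m ih =>
    have previous := ih (U := fun k => U k.castSucc)
      (hU.comp_monotone Fin.strictMono_castSucc.monotone)
      (fun k => hUB _) (fun k => hU (Fin.le_last k.castSucc)) (hUB (Fin.last m))
    have increment : (ceilIncrement x m : ℝ)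
        = ⌈∑ j ∈ range (m + 1), x j⌉₊ - ⌈∑ j ∈ range m, x j⌉₊ :=
      Nat.cast_sub (monotone_ceil_sum_range hx m.le_succ)
    have excess_lt_one := Nat.ceil_lt_add_one (sum_nonneg fun j (_ : j ∈ range (m + 1)) => hx j)
    have charge_le := mul_le_mul_of_nonneg_left (huU (Fin.last m)) (sub_nonneg.2
      (sub_le_iff_le_add'.2 excess_lt_one.le))
    rw [Fin.sum_univ_castSucc]
    simp only [Fin.val_castSucc, Fin.val_last, increment]
    rw [sum_range_succ] at charge_le ⊢
    linarith

lemma sum_ceilIncrement_mul_le (hx : ∀ k, 0 ≤ x k) {U : Fin m → ℝ} (hU : Antitone U)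
    (hU0 : ∀ k, 0 ≤ U k) {B : ℝ} (hB : 0 ≤ B) (hUB : ∀ k : Fin m, 0 < x k → U k ≤ B) :
    ∑ k : Fin m, ceilIncrement x k * U k ≤ B + ∑ k : Fin m, x k * U k := by
  have truncated := sum_ceilIncrement_sub_mul_add_le hx (U := fun k => min (U k) B) (u := 0)
    (fun _ _ h => min_le_min_right B (hU h)) (fun k => min_le_right _ _)
    (fun k => le_min (hU0 k) hB) hB
  have truncation_eq (k : Fin m) :
      (ceilIncrement x k - x k) * min (U k) B = ceilIncrement x k * U k - x k * U k := by
    rcases (hx k).eq_or_lt with h | h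
    · simp [← h, ceilIncrement_eq_zero h.symm]
    · rw [min_eq_left (hUB k h), sub_mul]
  simp only [truncation_eq, mul_zero, add_zero, sum_sub_distrib] at truncated
  linarith

end Rounding

lemma exists_assignment_sum_le_of_fractional {ι : Type*} [Fintype ι] [DecidableEq ι] {m : ℕ}
    {U : ι → Fin m → ℝ} {x : ι → ℕ → ℝ} {B : ι → ℝ}
    (hU : ∀ i, Antitone (U i)) (hU0 : ∀ i k, 0 ≤ U i k) (hx : ∀ i k, 0 ≤ x i k)
    (hcover : ∀ k < m, 1 ≤ ∑ i, x i k) (hB : ∀ i, 0 ≤ B i)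
    (hUB : ∀ i (k : Fin m), 0 < x i k → U i k ≤ B i) :
    ∃ f : Fin m → ι, ∀ i, ∑ k with f k = i, U i k ≤ B i + ∑ k : Fin m, x i k * U i k := by
  have enough_quota (k : ℕ) (hk : k < m) : k < ∑ i, ∑ j ∈ range (k + 1), ceilIncrement (x i) j := by
    have : ((k + 1 : ℕ) : ℝ) ≤ (∑ i, ⌈∑ j ∈ range (k + 1), x i j⌉₊ : ℕ) := by
      calc ((k + 1 : ℕ) : ℝ) = ∑ j ∈ range (k + 1), 1 := by simp
        _ ≤ ∑ j ∈ range (k + 1), ∑ i, x i j := sum_le_sum fun j hj =>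
            hcover j ((mem_range_succ_iff.1 hj).trans_lt hk)
        _ = ∑ i, ∑ j ∈ range (k + 1), x i j := sum_comm
        _ ≤ ∑ i, (⌈∑ j ∈ range (k + 1), x i j⌉₊ : ℝ) := sum_le_sum fun i _ => Nat.le_ceil _
        _ = _ := by push_cast; rfl
    simp only [sum_range_ceilIncrement (hx _)]
    exact_mod_cast this
  obtain ⟨f, hf⟩ := exists_assignment_sum_le_of_quota hU hU0 enough_quota
  exact ⟨f, fun i => (hf i).trans
    (sum_ceilIncrement_mul_le (hx i) (hU i) (hU0 i) (hB i) (hUB i))⟩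

section Windows

variable {ι : Type*} [Fintype ι] {s : ι → ℕ} {w : ι → ℝ}

/-- The total weight of the agents that have entered by time `k`, agent `i` entering at `s i`. -/
noncomputable def enteredWeight (s : ι → ℕ) (w : ι → ℝ) (k : ℕ) : ℝ :=
  ∑ i with s i ≤ k, w i

/-- A fractional schedule: agent `i` serves at a constant rate from its entry time `s i` until the
entered weight has more than doubled. -/
noncomputable def windowShare (s : ι → ℕ) (w : ι → ℝ) (i : ι) (k : ℕ) : ℝ :=
  if s i ≤ k ∧ enteredWeight s w k ≤ 2 * enteredWeight s w (s i) then
    2 * w i / enteredWeight s w (s i) else 0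

lemma enteredWeight_nonneg (hw : ∀ i, 0 ≤ w i) (k : ℕ) : 0 ≤ enteredWeight s w k :=
  sum_nonneg fun i _ => hw i

lemma enteredWeight_mono (hw : ∀ i, 0 ≤ w i) : Monotone (enteredWeight s w) := fun _ _ h =>
  sum_le_sum_of_subset_of_nonneg (monotone_filter_right _ fun _ _ hi => hi.trans h)
    fun i _ _ => hw i

lemma enteredWeight_pos (hw : ∀ i, 0 < w i) {k : ℕ} {i : ι} (hi : s i ≤ k) :
    0 < enteredWeight s w k :=
  sum_pos (fun j _ => hw j) ⟨i, by simpa using hi⟩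

lemma windowShare_nonneg (hw : ∀ i, 0 ≤ w i) (i : ι) (k : ℕ) : 0 ≤ windowShare s w i k := by
  have := hw i
  have := enteredWeight_nonneg (s := s) hw (s i)
  unfold windowShare
  split_ifs <;> positivity

lemma entered_of_windowShare_pos {i : ι} {k : ℕ} (h : 0 < windowShare s w i k) : s i ≤ k := by
  by_contra hik
  simp [windowShare, hik] at h

lemma sum_closedWindow_le_half (hw : ∀ i, 0 ≤ w i) (k : ℕ) :
    ∑ i with s i ≤ k ∧ 2 * enteredWeight s w (s i) < enteredWeight s w k, w i
      ≤ enteredWeight s w k / 2 := by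
  set closed : Finset ι := {i | s i ≤ k ∧ 2 * enteredWeight s w (s i) < enteredWeight s w k}
  rcases closed.eq_empty_or_nonempty with h | h
  · rw [h, sum_empty]
    exact div_nonneg (enteredWeight_nonneg hw k) zero_le_two
  -- All agents with a closed window have entered when the last of them enters.
  obtain ⟨last, hlast, hmax⟩ := exists_max_image closed s h
  calc ∑ i ∈ closed, w i ≤ enteredWeight s w (s last) :=
        sum_le_sum_of_subset_of_nonneg (fun i hi => by simpa using hmax i hi)
          fun i _ _ => hw i
    _ ≤ enteredWeight s w k / 2 := by linarith [(mem_filter.1 hlast).2.2]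

lemma one_le_sum_windowShare (hw : ∀ i, 0 < w i) {k : ℕ} (hk : ∃ i, s i ≤ k) :
    1 ≤ ∑ i, windowShare s w i k := by
  obtain ⟨i₀, hi₀⟩ := hk
  have T_pos := enteredWeight_pos hw hi₀
  set T := enteredWeight s w
  have half_le : T k / 2 ≤ ∑ i with s i ≤ k ∧ T k ≤ 2 * T (s i), w i := by
    have split := sum_filter_add_sum_filter_not ({i | s i ≤ k} : Finset ι)
      (fun i => T k ≤ 2 * T (s i)) w
    simp only [filter_filter, not_le] at split
    have total : ∑ i with s i ≤ k, w i = T k := rfl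
    linarith [sum_closedWindow_le_half (s := s) (fun i => (hw i).le) k]
  calc (1 : ℝ) = 2 / T k * (T k / 2) := by field_simp
    _ ≤ 2 / T k * ∑ i with s i ≤ k ∧ T k ≤ 2 * T (s i), w i := by gcongr
    _ = ∑ i with s i ≤ k ∧ T k ≤ 2 * T (s i), 2 * w i / T k := by
        rw [mul_sum]
        exact sum_congr rfl fun i _ => by ring
    _ ≤ ∑ i with s i ≤ k ∧ T k ≤ 2 * T (s i), 2 * w i / T (s i) := by
        refine sum_le_sum fun i hi => ?_
        have := hw i
        have := enteredWeight_pos hw (le_refl (s i))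
        have := enteredWeight_mono (s := s) (fun j => (hw j).le) (mem_filter.1 hi).2.1
        gcongr
    _ = ∑ i, windowShare s w i k := sum_filter _ _

lemma sum_windowShare_mul_le (hw : ∀ i, 0 < w i) {m : ℕ} {U : Fin m → ℝ} (hU0 : ∀ k, 0 ≤ U k)
    {C : ℝ} (hC : 0 ≤ C) (hprefix : ∀ k, ∑ j ∈ Iic k, U j ≤ C * enteredWeight s w k) (i : ι) :
    ∑ k : Fin m, windowShare s w i k * U k ≤ 4 * (C * w i) := by
  have T_entry_pos := enteredWeight_pos hw (le_refl (s i))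
  set T := enteredWeight s w
  set window : Finset (Fin m) := {k | s i ≤ k ∧ T k ≤ 2 * T (s i)}
  have window_sum_le : ∑ k ∈ window, U k ≤ C * (2 * T (s i)) := by
    rcases window.eq_empty_or_nonempty with h | h
    · rw [h, sum_empty]
      positivity
    calc ∑ k ∈ window, U k ≤ ∑ k ∈ Iic (window.max' h), U k :=
          sum_le_sum_of_subset_of_nonneg (fun k hk => mem_Iic.2 (window.le_max' k hk))
            fun k _ _ => hU0 k
      _ ≤ C * T (window.max' h) := hprefix _
      _ ≤ C * (2 * T (s i)) :=
          mul_le_mul_of_nonneg_left (mem_filter.1 (window.max'_mem h)).2.2 hC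
  calc ∑ k : Fin m, windowShare s w i k * U k = 2 * w i / T (s i) * ∑ k ∈ window, U k := by
        rw [mul_sum, sum_filter]
        exact sum_congr rfl fun k _ => ite_zero_mul _ _ _
    _ ≤ 2 * w i / T (s i) * (C * (2 * T (s i))) := by
        have := hw i
        gcongr
    _ = 4 * (C * w i) := by
        field_simp
        ring

end Windows

section EntryTimes

variable {ι : Type*} [Fintype ι] {w : ι → ℝ}

/-- The total weight of the agents of weight greater than `t`. -/
noncomputable def heavierWeight (w : ι → ℝ) (t : ℝ) : ℝ :=
  ∑ j with t < w j, w j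

/-- The first position `k`, counted from `0`, with `heavierWeight w (w i) ≤ (k + 1) * w i`: from
there on each chore in decreasing order of cost is affordable for agent `i`. The subtraction
truncates to `0` for the heaviest agents. -/
noncomputable def entryTime (w : ι → ℝ) (i : ι) : ℕ :=
  ⌈heavierWeight w (w i) / w i⌉₊ - 1

lemma entryTime_le_iff {i : ι} (hw : 0 < w i) {k : ℕ} :
    entryTime w i ≤ k ↔ heavierWeight w (w i) ≤ (k + 1) * w i := by
  rw [entryTime, tsub_le_iff_right, Nat.ceil_le, div_le_iff₀ hw, Nat.cast_add_one]

lemma exists_entryTime_eq_zero [Nonempty ι] : ∃ i, entryTime w i = 0 := by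
  obtain ⟨i, hi⟩ := Finite.exists_max w
  exact ⟨i, by simp [entryTime, heavierWeight, fun j => (hi j).not_gt]⟩

lemma heavierWeight_le_enteredWeight (hw : ∀ i, 0 ≤ w i) {s : ι → ℕ} {t : ℝ} {k : ℕ}
    (h : ∀ i, k < s i → w i ≤ t) : heavierWeight w t ≤ enteredWeight s w k :=
  sum_le_sum_of_subset_of_nonneg
    (monotone_filter_right _ fun i _ hi => not_lt.1 fun hik => (h i hik).not_gt hi)
    fun i _ _ => hw i

/-- The threshold `t` is the largest weight of an agent that has not entered by time `k`. -/
lemma exists_threshold_le_enteredWeight (hw : ∀ i, 0 < w i) (k : ℕ) :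
    ∃ t, 0 ≤ t ∧ heavierWeight w t ≤ enteredWeight (entryTime w) w k ∧
      (k + 1) * t ≤ enteredWeight (entryTime w) w k := by
  have hw0 (i : ι) : 0 ≤ w i := (hw i).le
  rcases ({i | k < entryTime w i} : Finset ι).eq_empty_or_nonempty with h | h
  · have entered (i : ι) : ¬k < entryTime w i := filter_eq_empty_iff.1 h (mem_univ i)
    refine ⟨0, le_rfl, heavierWeight_le_enteredWeight hw0 fun i hi => absurd hi (entered i), ?_⟩
    rw [mul_zero]
    exact enteredWeight_nonneg hw0 k
  · obtain ⟨i, hi, hmax⟩ := exists_max_image _ w h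
    have heavier_le : heavierWeight w (w i) ≤ enteredWeight (entryTime w) w k :=
      heavierWeight_le_enteredWeight hw0 fun j hj => hmax j (by simpa using hj)
    have not_entered : ¬entryTime w i ≤ k := not_le.2 (mem_filter.1 hi).2
    rw [entryTime_le_iff (hw i), not_le] at not_entered
    exact ⟨w i, hw0 i, heavier_le, not_entered.le.trans heavier_le⟩

end EntryTimes

section TailBounds

variable {ι α β : Type*} [Fintype ι] {w : ι → ℝ} {μ : ℝ}

/-- Chores costing more than `μ * t` each cost at most `μ` times the weight of the agents heavier
than `t` in total. This is what remains of a partition giving agent `j` cost at most `μ * w j`, in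
a form that does not depend on the names of the chores. -/
def IsTailBounded (w : ι → ℝ) (μ : ℝ) (v : α → ℝ) : Prop :=
  ∀ (t : ℝ) (S : Finset α), (∀ b ∈ S, μ * t < v b) → ∑ b ∈ S, v b ≤ μ * heavierWeight w t

lemma isTailBounded_of_partition {v : α → ℝ} {A : ι → Finset α} (hμ : 0 ≤ μ)
    (hv : ∀ b, 0 ≤ v b) (hdisj : Pairwise (Function.onFun Disjoint A)) (hcover : ∀ b, ∃ j, b ∈ A j)
    (hA : ∀ j, ∑ b ∈ A j, v b ≤ μ * w j) : IsTailBounded w μ v := by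
  classical
  intro t S hS
  have subset_heavy : S ⊆ ({j | t < w j} : Finset ι).biUnion A := fun b hb => by
    obtain ⟨j, hj⟩ := hcover b
    have : μ * t < μ * w j :=
      (hS b hb).trans_le ((single_le_sum (fun c _ => hv c) hj).trans (hA j))
    exact mem_biUnion.2 ⟨j, by simpa using lt_of_mul_lt_mul_left this hμ, hj⟩
  calc ∑ b ∈ S, v b ≤ ∑ b ∈ ({j | t < w j} : Finset ι).biUnion A, v b :=
        sum_le_sum_of_subset_of_nonneg subset_heavy fun b _ _ => hv b
    _ = ∑ j with t < w j, ∑ b ∈ A j, v b := sum_biUnion fun _ _ _ _ h => hdisj h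
    _ ≤ ∑ j with t < w j, μ * w j := sum_le_sum fun j _ => hA j
    _ = μ * heavierWeight w t := (mul_sum _ _ _).symm

namespace IsTailBounded

lemma comp_embedding {v : α → ℝ} (h : IsTailBounded w μ v) (e : β ↪ α) :
    IsTailBounded w μ (v ∘ e) := fun t S hS => by
  have := h t (S.map e) (forall_mem_map.2 hS)
  rwa [sum_map] at this

lemma sum_le {v : α → ℝ} (h : IsTailBounded w μ v) {t : ℝ} (hμt : 0 ≤ μ * t) (S : Finset α) :
    ∑ b ∈ S, v b ≤ μ * heavierWeight w t + #S * (μ * t) := by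
  classical
  have cheap_le : ∑ b ∈ S with ¬μ * t < v b, v b ≤ #S * (μ * t) :=
    calc ∑ b ∈ S with ¬μ * t < v b, v b ≤ #{b ∈ S | ¬μ * t < v b} • (μ * t) :=
          sum_le_card_nsmul _ _ _ fun b hb => not_lt.1 (mem_filter.1 hb).2
      _ ≤ #S • (μ * t) := nsmul_le_nsmul_left hμt (card_filter_le _ _)
      _ = #S * (μ * t) := nsmul_eq_mul _ _
  rw [← sum_filter_add_sum_filter_not S (fun b => μ * t < v b)]
  exact add_le_add (h t _ fun b hb => (mem_filter.1 hb).2) cheap_le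

variable {m : ℕ} {v : Fin m → ℝ}

lemma apply_le_of_entryTime_le (h : IsTailBounded w μ v) (hμ : 0 ≤ μ) (hv : Antitone v) {i : ι}
    (hw : 0 < w i) {k : Fin m} (hk : entryTime w i ≤ k) : v k ≤ μ * w i := by
  by_contra! hlt
  have prefix_gt : ∀ j ∈ Iic k, μ * w i < v j := fun _ hj => hlt.trans_le (hv (mem_Iic.1 hj))
  refine lt_irrefl ((k + 1) * (μ * w i)) ?_
  calc (k + 1) * (μ * w i) = ∑ _ ∈ Iic k, μ * w i := by simp
    _ < ∑ j ∈ Iic k, v j := sum_lt_sum_of_nonempty ⟨k, mem_Iic.2 le_rfl⟩ prefix_gt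
    _ ≤ μ * heavierWeight w (w i) := h (w i) _ prefix_gt
    _ ≤ μ * ((k + 1) * w i) := mul_le_mul_of_nonneg_left ((entryTime_le_iff hw).1 hk) hμ
    _ = (k + 1) * (μ * w i) := by ring

lemma sum_Iic_le (h : IsTailBounded w μ v) (hμ : 0 ≤ μ) (hw : ∀ i, 0 < w i) (k : Fin m) :
    ∑ j ∈ Iic k, v j ≤ 2 * μ * enteredWeight (entryTime w) w k := by
  obtain ⟨t, ht, heavier_le, light_le⟩ := exists_threshold_le_enteredWeight hw k
  calc ∑ j ∈ Iic k, v j ≤ μ * heavierWeight w t + #(Iic k) * (μ * t) :=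
        h.sum_le (mul_nonneg hμ ht) _
    _ = μ * (heavierWeight w t + (k + 1) * t) := by
        rw [Fin.card_Iic]
        push_cast
        ring
    _ ≤ μ * (enteredWeight (entryTime w) w k + enteredWeight (entryTime w) w k) := by gcongr
    _ = 2 * μ * enteredWeight (entryTime w) w k := by ring

end IsTailBounded

lemma exists_owner_sum_le_nine_mul [Nonempty ι] [DecidableEq ι] {m : ℕ} {V : ι → Fin m → ℝ}
    {μ : ι → ℝ} (hV : ∀ i b, 0 ≤ V i b) (hw : ∀ i, 0 < w i) (hμ : ∀ i, 0 ≤ μ i)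
    (htail : ∀ i, IsTailBounded w (μ i) (V i)) :
    ∃ owner : Fin m → ι, ∀ i, ∑ b with owner b = i, V i b ≤ 9 * (μ i * w i) := by
  choose σ hσ using fun i => exists_perm_antitone_comp (V i)
  have sorted_tail (i : ι) : IsTailBounded w (μ i) (V i ∘ σ i) :=
    (htail i).comp_embedding (σ i).toEmbedding
  obtain ⟨i₀, hi₀⟩ := exists_entryTime_eq_zero (w := w)
  obtain ⟨f, hf⟩ := exists_assignment_sum_le_of_fractional hσ (fun i k => hV i _)
    (windowShare_nonneg (s := entryTime w) fun i => (hw i).le)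
    (fun k _ => one_le_sum_windowShare hw ⟨i₀, hi₀ ▸ k.zero_le⟩)
    (fun i => mul_nonneg (hμ i) (hw i).le)
    (fun i k hik => (sorted_tail i).apply_le_of_entryTime_le (hμ i) (hσ i) (hw i)
      (entered_of_windowShare_pos hik))
  obtain ⟨owner, howner⟩ := exists_owner_sum_le_sum_sorted hσ f
  refine ⟨owner, fun i => ((howner i).trans (hf i)).trans ?_⟩
  have fractional_le := sum_windowShare_mul_le hw (fun k => hV i (σ i k))
    (mul_nonneg zero_le_two (hμ i)) ((sorted_tail i).sum_Iic_le (hμ i) hw) i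
  simp only [Function.comp_apply]
  linarith

end TailBounds

section Shares

variable {n m : ℕ} {V : Fin n → Fin m → ℝ} {w : Fin n → ℝ}

lemma isPartition_fibers (owner : Fin m → Fin n) : IsPartition fun i => {b | owner b = i} := by
  refine ⟨fun j k hjk => disjoint_filter.2 fun b _ hj hk => hjk (hj.symm.trans hk), ?_⟩
  ext b
  simp

lemma WMMS_nonneg (hV : ∀ i b, 0 ≤ V i b) (hw : ∀ i, 0 ≤ w i) (i : Fin n) : 0 ≤ WMMS V w i := by
  refine Real.sInf_nonneg ?_
  rintro _ ⟨A, -, rfl⟩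
  exact Real.iSup_nonneg fun j =>
    mul_nonneg (sum_nonneg fun b _ => hV i b) (div_nonneg (hw i) (hw j))

lemma WMMS_div_nonneg (hV : ∀ i b, 0 ≤ V i b) (hw : ∀ i, 0 ≤ w i) (i : Fin n) :
    0 ≤ WMMS V w i / w i :=
  div_nonneg (WMMS_nonneg hV hw i) (hw i)

lemma exists_isPartition_costOf_mul_le_WMMS [NeZero n] (V : Fin n → Fin m → ℝ) (w : Fin n → ℝ)
    (i : Fin n) :
    ∃ A : Fin n → Finset (Fin m), IsPartition A ∧
      ∀ j, costOf V i (A j) * (w i / w j) ≤ WMMS V w i := by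
  let value (A : Fin n → Finset (Fin m)) : ℝ := ⨆ j, costOf V i (A j) * (w i / w j)
  let values : Set ℝ := {x | ∃ A, IsPartition A ∧ x = value A}
  have finite : values.Finite := (Set.finite_range value).subset <| by
    rintro _ ⟨A, -, rfl⟩
    exact ⟨A, rfl⟩
  have nonempty : values.Nonempty := ⟨_, _, isPartition_fibers fun _ => 0, rfl⟩
  obtain ⟨A, hA, hvalue⟩ := nonempty.csInf_mem finite
  exact ⟨A, hA, fun j => (le_ciSup (Set.finite_range _).bddAbove j).trans hvalue.ge⟩

lemma isTailBounded_WMMS_div [NeZero n] (hV : ∀ i b, 0 ≤ V i b) (hw : ∀ i, 0 < w i) (i : Fin n) :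
    IsTailBounded w (WMMS V w i / w i) (V i) := by
  obtain ⟨A, ⟨hdisj, hunion⟩, hA⟩ := exists_isPartition_costOf_mul_le_WMMS V w i
  refine isTailBounded_of_partition (WMMS_div_nonneg hV (fun j => (hw j).le) i) (hV i) hdisj
    (fun b => ?_) fun j => ?_
  · simpa using hunion.ge (mem_univ b)
  · have := hA j
    rw [mul_div_assoc', div_le_iff₀ (hw j)] at this
    rwa [div_mul_eq_mul_div, le_div_iff₀ (hw i)]

end Shares

theorem exists_ten_WMMS_assignment_of_entitlementDivisible_general (n m : ℕ) [NeZero n]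
    (V : Fin n → Fin m → ℝ) (w : Fin n → ℝ) (hV : ∀ i b, 0 ≤ V i b) (hw : ∀ i, 0 < w i) :
    ∃ S : Fin n → Finset (Fin m), IsPartition S ∧ ∀ i, costOf V i (S i) ≤ 9 * WMMS V w i := by
  obtain ⟨owner, howner⟩ := exists_owner_sum_le_nine_mul hV hw
    (WMMS_div_nonneg hV fun j => (hw j).le) (isTailBounded_WMMS_div hV hw)
  refine ⟨_, isPartition_fibers owner, fun i => ?_⟩
  simpa only [costOf, div_mul_cancel₀ _ (hw i).ne'] using howner i

/-- every entitlement-divisible instance admits a 10-WMMS assignment. -/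
theorem exists_ten_WMMS_assignment_of_entitlementDivisible (n m : ℕ)
    (V : Fin n → Fin m → ℝ) (w : Fin n → ℝ)
    (hV : ∀ i b, 0 ≤ V i b) (hw : ∀ i, 0 < w i)
    (hw1 : ∀ i, w i ≤ 1) (hsum : ∑ i, w i = 1)
    (hdiv : ∀ i j, ∃ k : ℤ, max (w i / w j) (w j / w i) = (k : ℝ)) :
    ∃ S : Fin n → Finset (Fin m), IsPartition S ∧
      ∀ i, costOf V i (S i) ≤ 10 * WMMS V w i := by
  have : NeZero n := ⟨by rintro rfl; simp at hsum⟩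
  obtain ⟨S, hS, hcost⟩ := exists_ten_WMMS_assignment_of_entitlementDivisible_general n m V w hV hw
  exact ⟨S, hS, fun i => by linarith [hcost i, WMMS_nonneg hV (fun j => (hw j).le) i]⟩
end

section
/- Consider an instance of the asymmetric chore division problem whose chores are indexed b_1,…,b_m with V_i({b_1}) ≤ V_i({b_2}) ≤ … ≤ V_i({b_m}) for every agent i, whose entitlements satisfy w_1 ≤ w_2 ≤ … ≤ w_n, and which is normalized so that WMMS_i = w_i for every agent i. Let p ∈ {1,…,n} and s ∈ {1,…,m}. If m − s ≥ (∑_{j>p} w_j)/w_p, then V_i({b_s}) ≤ w_p holds for every agent i. -/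
open Finset

/-!
Take a partition attaining `WMMS V w i` and put `c = WMMS V w i / w i`, so that every bundle `A j`
costs agent `i` at most `c * w j`. If `b_s` cost more than `c * w p`, then each of the `m - s + 1`
chores `b_s, …, b_m` would be too expensive for every bundle `A j` with `j ≤ p`. All of them would
lie in the bundles `A j` with `j > p`, whose total cost is at most
`c * ∑ j > p, w j ≤ (m - s) * (c * w p)`: there is one chore too many.
-/

section

variable {n m : ℕ} {V : Fin n → Fin m → ℝ} {w : Fin n → ℝ} {i : Fin n}
  {A : Fin n → Finset (Fin m)} {S : Finset (Fin m)} {J : Finset (Fin n)}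

theorem costOf_nonneg (hV : ∀ b, 0 ≤ V i b) (S : Finset (Fin m)) : 0 ≤ costOf V i S :=
  sum_nonneg fun b _ => hV b

theorem le_costOf_of_mem (hV : ∀ b, 0 ≤ V i b) {b : Fin m} (hb : b ∈ S) :
    V i b ≤ costOf V i S :=
  single_le_sum (fun c _ => hV c) hb

theorem card_mul_lt_costOf {c : ℝ} (hS : S.Nonempty) (hc : ∀ b ∈ S, c < V i b) :
    #S * c < costOf V i S :=
  calc #S * c = ∑ _b ∈ S, c := by rw [sum_const, nsmul_eq_mul]
    _ < costOf V i S := sum_lt_sum_of_nonempty hS hc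

theorem isPartition_fiber (f : Fin m → Fin n) : IsPartition fun j => {b | f b = j} := by
  refine ⟨fun j k hjk => disjoint_filter.2 fun b _ hj hk => hjk (hj.symm.trans hk), ?_⟩
  ext b
  simp

theorem IsPartition.exists_mem (hA : IsPartition A) (b : Fin m) : ∃ j, b ∈ A j := by
  have hb : b ∈ univ.biUnion A := hA.2 ▸ mem_univ b
  simpa using hb

theorem IsPartition.subset_biUnion_of_costOf_lt (hA : IsPartition A) (hV : ∀ b, 0 ≤ V i b)
    (hlt : ∀ j ∉ J, ∀ b ∈ S, costOf V i (A j) < V i b) : S ⊆ J.biUnion A := by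
  intro b hb
  obtain ⟨j, hbj⟩ := hA.exists_mem b
  have hj : j ∈ J := by
    by_contra hj
    exact (hlt j hj b hb).not_ge (le_costOf_of_mem hV hbj)
  exact mem_biUnion.2 ⟨j, hj, hbj⟩

theorem IsPartition.costOf_le_sum_of_subset_biUnion (hA : IsPartition A)
    (hV : ∀ b, 0 ≤ V i b) (hS : S ⊆ J.biUnion A) :
    costOf V i S ≤ ∑ j ∈ J, costOf V i (A j) :=
  calc costOf V i S ≤ costOf V i (J.biUnion A) :=
        sum_le_sum_of_subset_of_nonneg hS fun b _ _ => hV b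
    _ = ∑ j ∈ J, costOf V i (A j) := sum_biUnion fun j _ k _ hjk => hA.1 j k hjk

theorem IsPartition.card_mul_lt_sum_of_costOf_le (hA : IsPartition A) (hV : ∀ b, 0 ≤ V i b)
    {u : Fin n → ℝ} {c : ℝ} (hu : ∀ j, costOf V i (A j) ≤ u j) (huc : ∀ j ∉ J, u j ≤ c)
    (hS : S.Nonempty) (hc : ∀ b ∈ S, c < V i b) : #S * c < ∑ j ∈ J, u j := by
  have hSJ : S ⊆ J.biUnion A := hA.subset_biUnion_of_costOf_lt hV fun j hj b hb =>
    ((hu j).trans (huc j hj)).trans_lt (hc b hb)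
  calc #S * c < costOf V i S := card_mul_lt_costOf hS hc
    _ ≤ ∑ j ∈ J, costOf V i (A j) := hA.costOf_le_sum_of_subset_biUnion hV hSJ
    _ ≤ ∑ j ∈ J, u j := sum_le_sum fun j _ => hu j

theorem wmms_nonneg (hV : ∀ b, 0 ≤ V i b) (hw : ∀ j, 0 ≤ w j) : 0 ≤ WMMS V w i := by
  refine Real.sInf_nonneg ?_
  rintro _ ⟨A, -, rfl⟩
  exact Real.iSup_nonneg fun j => mul_nonneg (costOf_nonneg hV _) (div_nonneg (hw i) (hw j))

theorem exists_isPartition_wmms_eq (V : Fin n → Fin m → ℝ) (w : Fin n → ℝ) (i : Fin n) :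
    ∃ A, IsPartition A ∧ WMMS V w i = ⨆ j, costOf V i (A j) * (w i / w j) := by
  let shares : Set ℝ := {x | ∃ A : Fin n → Finset (Fin m), IsPartition A ∧
    x = ⨆ j, costOf V i (A j) * (w i / w j)}
  have hfinite : shares.Finite := by
    refine (Set.finite_range fun A : Fin n → Finset (Fin m) =>
      ⨆ j, costOf V i (A j) * (w i / w j)).subset ?_
    rintro _ ⟨A, -, rfl⟩
    exact Set.mem_range_self A
  have hnonempty : shares.Nonempty := ⟨_, _, isPartition_fiber fun _ => i, rfl⟩
  exact hnonempty.csInf_mem hfinite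

theorem exists_isPartition_costOf_le (V : Fin n → Fin m → ℝ) (hw : ∀ j, 0 < w j) (i : Fin n) :
    ∃ A, IsPartition A ∧ ∀ j, costOf V i (A j) ≤ WMMS V w i / w i * w j := by
  obtain ⟨A, hA, hwmms⟩ := exists_isPartition_wmms_eq V w i
  refine ⟨A, hA, fun j => ?_⟩
  have hj : costOf V i (A j) * (w i / w j) ≤ WMMS V w i :=
    hwmms ▸ le_ciSup (Set.finite_range fun k => costOf V i (A k) * (w i / w k)).bddAbove j
  calc costOf V i (A j) ≤ WMMS V w i / (w i / w j) :=
        (le_div_iff₀ (div_pos (hw i) (hw j))).2 hj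
    _ = WMMS V w i / w i * w j := by rw [div_div_eq_mul_div, div_mul_eq_mul_div]

theorem cost_single_chore_le_general (hV : ∀ b, 0 ≤ V i b) (hw : ∀ j, 0 < w j)
    (hVsorted : Monotone (V i)) (hwsorted : Monotone w) (p : Fin n) (bs : Fin m)
    (hs : (∑ j with p < j, w j) / w p ≤ (m : ℝ) - ((bs : ℕ) + 1)) :
    V i bs ≤ WMMS V w i / w i * w p := by
  obtain ⟨A, hA, hcost⟩ := exists_isPartition_costOf_le V hw i
  set c := WMMS V w i / w i
  have hc : 0 ≤ c := div_nonneg (wmms_nonneg hV fun j => (hw j).le) (hw i).le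
  by_contra! hlt
  have hlower : (m - (bs : ℕ) : ℝ) * (c * w p) < ∑ j with p < j, c * w j := by
    have hcard : (#(Ici bs) : ℝ) = m - (bs : ℕ) := by
      rw [Fin.card_Ici, Nat.cast_sub bs.isLt.le]
    rw [← hcard]
    refine hA.card_mul_lt_sum_of_costOf_le hV hcost (fun j hj => ?_) nonempty_Ici fun b hb =>
      hlt.trans_le (hVsorted (mem_Ici.1 hb))
    have hjp : j ≤ p := by simpa using hj
    exact mul_le_mul_of_nonneg_left (hwsorted hjp) hc
  have hupper : ∑ j with p < j, c * w j ≤ (m - ((bs : ℕ) + 1) : ℝ) * (c * w p) :=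
    calc ∑ j with p < j, c * w j = c * ∑ j with p < j, w j := (mul_sum ..).symm
      _ ≤ c * ((m - ((bs : ℕ) + 1)) * w p) :=
        mul_le_mul_of_nonneg_left ((div_le_iff₀ (hw p)).1 hs) hc
      _ = (m - ((bs : ℕ) + 1)) * (c * w p) := by ring
  linarith [mul_nonneg hc (hw p).le]

end

/-- Lemma 3: in a sorted, entitlement-sorted, normalized instance
(`WMMSᵢ = wᵢ` for all `i`), if `m − s ≥ (∑_{j>p} wⱼ)/w_p` (where `s` ranges over
`{1,…,m}`, represented by the chore `bs : Fin m` with 1-based index `bs+1`),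
then `Vᵢ({b_s}) ≤ w_p` for every agent `i`. -/
theorem cost_single_chore_le (n m : ℕ) (V : Fin n → Fin m → ℝ) (w : Fin n → ℝ)
    (hV : ∀ i b, 0 ≤ V i b) (hw : ∀ i, 0 < w i) (hw1 : ∀ i, w i ≤ 1)
    (hsum : ∑ i, w i = 1)
    (hVsorted : ∀ i, Monotone (V i)) (hwsorted : Monotone w)
    (hnorm : ∀ i, WMMS V w i = w i)
    (p : Fin n) (bs : Fin m)
    (hs : (m : ℝ) - ((bs : ℕ) + 1) ≥
      (∑ j ∈ Finset.univ.filter (fun j => p < j), w j) / w p) :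
    ∀ i, V i bs ≤ w p := by
  intro i
  simpa only [hnorm i, div_self (hw i).ne', one_mul] using
    cost_single_chore_le_general (hV i) hw (hVsorted i) hwsorted p bs hs
end
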